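/- arXiv:1703.10681 — 2 statements merged into one kernel-verified Lean document; each statement's English description precedes it below -/
import Mathlib

section
/- Suppose the oracle O has the property that O(b, A') depends only on the restriction of the bid vector b to A' (in particular, O(b, A ∖ {i}) does not depend on i's bid). Then for every fixed α ∈ (0,1], the allocation rule b ↦ Greedy-OM(α, b) is monotone: for every bid vector b with positive entries, every agent i ∈ Greedy-OM(α, b), and every 0 < β ≤ b_i, one has i ∈ Greedy-OM(α, (β, b_{−i})). -/
open Classical

/-- Marginal value `m_i(S) = v(S ∪ {i}) - v(S)`. -/
noncomputable def marg {ι : Type*} [DecidableEq ι] (v : Finset ι → ℝ) (S : Finset ι) (i : ι) : ℝ :=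
  v (insert i S) - v S

/-- The next agent in the greedy order once the set `S` has been selected:
an agent of `Sᶜ` maximizing marginal value over bid, ties broken by the fixed linear order. -/
noncomputable def pick {ι : Type*} [Fintype ι] [LinearOrder ι] [Nonempty ι]
    (v : Finset ι → ℝ) (b : ι → ℝ) (S : Finset ι) : ι :=
  if h : Sᶜ.Nonempty then
    (Sᶜ.filter fun j => ∀ j' ∈ Sᶜ, marg v S j' / b j' ≤ marg v S j / b j).min'
      (by
        obtain ⟨j, hj, hmax⟩ := Finset.exists_max_image Sᶜ (fun j => marg v S j / b j) h
        exact ⟨j, Finset.mem_filter.mpr ⟨hj, hmax⟩⟩)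
  else Classical.arbitrary ι

/-- `greedySet v b t` is the set `S_t` of the first `t` agents in the greedy order
computed with respect to the bid vector `b`. -/
noncomputable def greedySet {ι : Type*} [Fintype ι] [LinearOrder ι] [Nonempty ι]
    (v : Finset ι → ℝ) (b : ι → ℝ) : ℕ → Finset ι
  | 0 => ∅
  | t + 1 => insert (pick v b (greedySet v b t)) (greedySet v b t)

/-- `agent v b k` is the `k`-th agent `a_k` in the greedy order (1-indexed). -/
noncomputable def agent {ι : Type*} [Fintype ι] [LinearOrder ι] [Nonempty ι]
    (v : Finset ι → ℝ) (b : ι → ℝ) (k : ℕ) : ι :=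
  pick v b (greedySet v b (k - 1))

/-- `optVal v b B A'` is the maximum of `v S` over `S ⊆ A'` with `∑_{i ∈ S} b i ≤ B`. -/
noncomputable def optVal {ι : Type*} (v : Finset ι → ℝ) (b : ι → ℝ) (B : ℝ)
    (A' : Finset ι) : ℝ :=
  sSup (v '' {S : Finset ι | S ⊆ A' ∧ ∑ i ∈ S, b i ≤ B})

/-- The greedy threshold mechanism `Greedy-TM(γ, b)`: it outputs `S_{k-1}` where `k` is the
least index with `b_{a_k} · v(S_k) > γ · B · m_{a_k}(S_{k-1})`, and all of `A` if no such `k`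
exists. -/
noncomputable def greedyTM {ι : Type*} [Fintype ι] [LinearOrder ι] [Nonempty ι]
    (v : Finset ι → ℝ) (B γ : ℝ) (b : ι → ℝ) : Finset ι :=
  if h : ∃ k, (1 ≤ k ∧ k ≤ Fintype.card ι) ∧
      b (agent v b k) * v (greedySet v b k) >
        γ * B * marg v (greedySet v b (k - 1)) (agent v b k)
  then greedySet v b (Nat.find h - 1)
  else Finset.univ

/-- The exponential-time greedy oracle mechanism `Greedy-EOM(α, b)`: it outputs `S_{k-1}` where
`k` is the least index with `v(S_k) > α · opt_b(A, B)`, and all of `A` if no such `k` exists. -/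
noncomputable def greedyEOM {ι : Type*} [Fintype ι] [LinearOrder ι] [Nonempty ι]
    (v : Finset ι → ℝ) (B α : ℝ) (b : ι → ℝ) : Finset ι :=
  if h : ∃ k, (1 ≤ k ∧ k ≤ Fintype.card ι) ∧
      v (greedySet v b k) > α * optVal v b B Finset.univ
  then greedySet v b (Nat.find h - 1)
  else Finset.univ

/-- The greedy oracle mechanism `Greedy-OM(α, b)` with oracle `O`: it outputs
`{ a_t : 1 ≤ t ≤ n, v(S_t) ≤ α · O(b, A \ {a_t}) }`. -/
noncomputable def greedyOM {ι : Type*} [Fintype ι] [LinearOrder ι] [Nonempty ι]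
    (v : Finset ι → ℝ) (O : (ι → ℝ) → Finset ι → ℝ) (α : ℝ) (b : ι → ℝ) : Finset ι :=
  ((Finset.Icc 1 (Fintype.card ι)).filter
      (fun t => v (greedySet v b t) ≤ α * O b (Finset.univ.erase (agent v b t)))).image
    (fun t => agent v b t)

/-- An allocation rule `f`, mapping bid vectors with positive entries to subsets of the agents,
is monotone if a winner remains a winner after lowering his bid. -/
def MonotoneAlloc {ι : Type*} [DecidableEq ι] (f : (ι → ℝ) → Finset ι) : Prop :=
  ∀ b : ι → ℝ, (∀ j, 0 < b j) → ∀ i ∈ f b, ∀ β : ℝ, 0 < β → β ≤ b i →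
    i ∈ f (Function.update b i β)

/-!
Lowering bids raises only the ratios `m_j(S) / b_j` of the agents who lowered them. So when only
agent `i` lowers his bid, the greedy order is unchanged up to the moment `i` is picked, and `i` is
picked no later than before. At that moment the selected set is contained in the one preceding `i`
in the old order, so `v(S_t)` has not grown, while the threshold `α · O(b, A ∖ {i})` has not moved.
-/

section LeastMaximizer

variable {ι κ : Type*} [Preorder ι] [Preorder κ]

theorem isLeast_setOf_isMaxOn_of_le {f g : ι → κ} {s : Set ι} {k : ι}
    (hfg : ∀ j ∈ s, f j ≤ g j) (hk : g k ≤ f k) (hg : IsLeast {j ∈ s | IsMaxOn g s j} k) :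
    IsLeast {j ∈ s | IsMaxOn f s j} k := by
  obtain ⟨⟨hks, hmax⟩, hleast⟩ := hg
  have hgf : ∀ j ∈ s, g j ≤ f k := fun j hj => (hmax hj).trans hk
  refine ⟨⟨hks, fun j hj => (hfg j hj).trans (hgf j hj)⟩, ?_⟩
  rintro p ⟨hps, hp⟩
  exact hleast ⟨hps, fun j hj => (hgf j hj).trans ((hp hks).trans (hfg p hps))⟩

end LeastMaximizer

theorem marg_nonneg {ι : Type*} [DecidableEq ι] {v : Finset ι → ℝ} (hv : Monotone v)
    (S : Finset ι) (i : ι) : 0 ≤ marg v S i :=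
  sub_nonneg.mpr (hv (Finset.subset_insert i S))

section GreedyOrder

variable {ι : Type*} [Fintype ι] [LinearOrder ι] [Nonempty ι]
  {v : Finset ι → ℝ} {b b' : ι → ℝ} {S : Finset ι} {i : ι}

theorem isLeast_pick (v : Finset ι → ℝ) (b : ι → ℝ) (hS : Sᶜ.Nonempty) :
    IsLeast {j ∈ (↑Sᶜ : Set ι) | IsMaxOn (fun j => marg v S j / b j) ↑Sᶜ j} (pick v b S) := by
  rw [pick, dif_pos hS]
  convert Finset.isLeast_min' _ _ using 1
  ext j
  simp [isMaxOn_iff]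

theorem pick_eq_pick_of_le (hv : Monotone v) (hpos : ∀ j, 0 < b' j) (hle : b' ≤ b)
    (hbid : b' (pick v b' S) = b (pick v b' S)) : pick v b' S = pick v b S := by
  by_cases hS : Sᶜ.Nonempty
  · have hratio : ∀ j ∈ (↑Sᶜ : Set ι), marg v S j / b j ≤ marg v S j / b' j := fun j _ =>
      div_le_div_of_nonneg_left (marg_nonneg hv S j) (hpos j) (hle j)
    exact (isLeast_setOf_isMaxOn_of_le hratio (by rw [hbid]) (isLeast_pick v b' hS)).unique
      (isLeast_pick v b hS)
  · rw [pick, pick, dif_neg hS, dif_neg hS]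

theorem greedySet_succ (v : Finset ι → ℝ) (b : ι → ℝ) (t : ℕ) :
    greedySet v b (t + 1) = insert (pick v b (greedySet v b t)) (greedySet v b t) :=
  rfl

theorem greedySet_mono (v : Finset ι → ℝ) (b : ι → ℝ) : Monotone (greedySet v b) :=
  monotone_nat_of_le_succ fun _ => Finset.subset_insert _ _

theorem greedySet_eq_or_exists_pick_eq (hv : Monotone v) (hpos : ∀ j, 0 < b' j) (hle : b' ≤ b)
    (hne : ∀ j ≠ i, b' j = b j) (t : ℕ) :
    greedySet v b' t = greedySet v b t ∨
      ∃ s < t, greedySet v b' s = greedySet v b s ∧ pick v b' (greedySet v b' s) = i := by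
  induction t with
  | zero => exact Or.inl rfl
  | succ t ih =>
    rcases ih with hset | ⟨s, hst, hs⟩
    · by_cases hpick : pick v b' (greedySet v b' t) = i
      · exact Or.inr ⟨t, t.lt_succ_self, hset, hpick⟩
      · left
        rw [greedySet_succ, greedySet_succ, pick_eq_pick_of_le hv hpos hle (hne _ hpick), hset]
    · exact Or.inr ⟨s, hst.trans t.lt_succ_self, hs⟩

theorem exists_le_pick_eq_of_pick_eq (hv : Monotone v) (hpos : ∀ j, 0 < b' j) (hle : b' ≤ b)
    (hne : ∀ j ≠ i, b' j = b j) {t : ℕ} (ht : pick v b (greedySet v b t) = i) :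
    ∃ s ≤ t, greedySet v b' s = greedySet v b s ∧ pick v b' (greedySet v b' s) = i := by
  rcases greedySet_eq_or_exists_pick_eq hv hpos hle hne t with hset | ⟨s, hst, hs⟩
  · refine ⟨t, le_rfl, hset, ?_⟩
    by_contra hpick
    exact hpick (by rw [pick_eq_pick_of_le hv hpos hle (hne _ hpick), hset, ht])
  · exact ⟨s, hst.le, hs⟩

theorem mem_greedyOM_iff {O : (ι → ℝ) → Finset ι → ℝ} {α : ℝ} :
    i ∈ greedyOM v O α b ↔ ∃ t < Fintype.card ι, pick v b (greedySet v b t) = i ∧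
      v (insert i (greedySet v b t)) ≤ α * O b (Finset.univ.erase i) := by
  simp only [greedyOM, Finset.mem_image, Finset.mem_filter, Finset.mem_Icc]
  constructor
  · rintro ⟨_ | t, ⟨⟨hone, hcard⟩, hval⟩, rfl⟩
    · omega
    · exact ⟨t, hcard, rfl, hval⟩
  · rintro ⟨t, hcard, rfl, hval⟩
    exact ⟨t + 1, ⟨⟨t.succ_pos, hcard⟩, hval⟩, rfl⟩

end GreedyOrder

theorem greedyOM_monotone_general {ι : Type*} [Fintype ι] [LinearOrder ι] [Nonempty ι]
    {v : Finset ι → ℝ} (hv : Monotone v) {O : (ι → ℝ) → Finset ι → ℝ}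
    (hO : ∀ (b : ι → ℝ) (i : ι) (β : ℝ),
      O (Function.update b i β) (Finset.univ.erase i) = O b (Finset.univ.erase i))
    (α : ℝ) : MonotoneAlloc (greedyOM v O α) := by
  intro b hb i hi β hβ hle
  obtain ⟨t, hcard, hpick, hval⟩ := mem_greedyOM_iff.mp hi
  have hpos : ∀ j, 0 < Function.update b i β j :=
    (Function.forall_update_iff b fun _ x => 0 < x).mpr ⟨hβ, fun j _ => hb j⟩
  obtain ⟨s, hst, hset, hpick'⟩ := exists_le_pick_eq_of_pick_eq hv hpos
    (update_le_self_iff.mpr hle) (fun j hj => Function.update_of_ne hj β b) hpick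
  refine mem_greedyOM_iff.mpr ⟨s, hst.trans_lt hcard, hpick', ?_⟩
  calc v (insert i (greedySet v (Function.update b i β) s))
      = v (insert i (greedySet v b s)) := by rw [hset]
    _ ≤ v (insert i (greedySet v b t)) :=
      hv (Finset.insert_subset_insert i (greedySet_mono v b hst))
    _ ≤ α * O b (Finset.univ.erase i) := hval
    _ = α * O (Function.update b i β) (Finset.univ.erase i) := by rw [hO]

/-- if the oracle's answer on `A'` depends only on the restriction of the bid
vector to `A'`, then for every fixed `α ∈ (0,1]` the allocation rule `b ↦ Greedy-OM(α, b)`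
is monotone (part of Lemma 4.6). -/
theorem greedyOM_monotone {ι : Type*} [Fintype ι] [LinearOrder ι] [Nonempty ι]
    (v : Finset ι → ℝ) (hv0 : v (∅ : Finset ι) = 0)
    (hvmono : ∀ S T : Finset ι, S ⊆ T → v S ≤ v T)
    (hvsub : ∀ S T : Finset ι, v (S ∪ T) + v (S ∩ T) ≤ v S + v T)
    (O : (ι → ℝ) → Finset ι → ℝ)
    (hO : ∀ (b b' : ι → ℝ) (A' : Finset ι), (∀ j ∈ A', b j = b' j) → O b A' = O b' A')
    (α : ℝ) (hα0 : 0 < α) (hα1 : α ≤ 1) :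
    MonotoneAlloc (fun b => greedyOM v O α b) :=
  greedyOM_monotone_general (fun S T => hvmono S T) (fun b _ β => hO _ b _ fun _ hj =>
    Function.update_of_ne (Finset.ne_of_mem_erase hj) β b) α
end

section
/- Let r ≥ 1 and α ∈ (0,1], and suppose the oracle O satisfies O(c, A') ≤ opt(A', B) ≤ r · O(c, A') for every A' ⊆ A (an r-approximation oracle). Let S = Greedy-OM(α, c) with respect to the true costs c, suppose S ≠ A, and let k be the largest index such that S_{k−1} ⊆ S (so a_k ∉ S). Then (r/α) · v(S_{k−1}) + (1 + r/α) · v({i*}) ≥ opt(A, B). -/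
open Classical

/-!
Let `a` be an agent rejected by the mechanism, reached at step `k` of the greedy order. Removing `a`
from a feasible set keeps it feasible and, by subadditivity, loses at most `v {a}`, so
`opt A ≤ opt (A \ {a}) + v {a}`. Rejection means `α * O (A \ {a}) < v S_k`, hence
`opt (A \ {a}) ≤ r * O (A \ {a}) ≤ (r / α) * v S_k`, and `v S_k ≤ v S_{k-1} + v {a}` by
subadditivity again. The agent following the longest accepted prefix is rejected.
-/

theorem apply_insert_le_add_apply_singleton {ι : Type*} [DecidableEq ι] {v : Finset ι → ℝ}
    (hv0 : 0 ≤ v ∅) (hvmono : Monotone v)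
    (hvsub : ∀ S T : Finset ι, v (S ∪ T) + v (S ∩ T) ≤ v S + v T) (i : ι) (S : Finset ι) :
    v (insert i S) ≤ v S + v {i} := by
  have hinter : 0 ≤ v ({i} ∩ S) := hv0.trans (hvmono (Finset.empty_subset _))
  have hunion := hvsub {i} S
  rw [← Finset.insert_eq] at hunion
  linarith

section Optimum

variable {ι : Type*} {v : Finset ι → ℝ} {b : ι → ℝ} {B : ℝ} {A' : Finset ι}

theorem le_optVal {S : Finset ι} (hS : S ⊆ A') (hcost : ∑ i ∈ S, b i ≤ B) :
    v S ≤ optVal v b B A' := by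
  have hfin : {S : Finset ι | S ⊆ A' ∧ ∑ i ∈ S, b i ≤ B}.Finite :=
    A'.powerset.finite_toSet.subset fun _ hT ↦ Finset.mem_coe.2 (Finset.mem_powerset.2 hT.1)
  exact le_csSup (hfin.image v).bddAbove ⟨S, ⟨hS, hcost⟩, rfl⟩

theorem optVal_le {x : ℝ} (hB : 0 ≤ B) (hx : ∀ S ⊆ A', ∑ i ∈ S, b i ≤ B → v S ≤ x) :
    optVal v b B A' ≤ x := by
  refine csSup_le ⟨v ∅, ∅, ⟨A'.empty_subset, by simpa using hB⟩, rfl⟩ ?_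
  rintro _ ⟨S, ⟨hS, hcost⟩, rfl⟩
  exact hx S hS hcost

theorem optVal_le_optVal_erase_add [DecidableEq ι] (hvmono : Monotone v) {i : ι}
    (hinsert : ∀ S : Finset ι, v (insert i S) ≤ v S + v {i}) (hB : 0 ≤ B) (hbi : 0 ≤ b i) :
    optVal v b B A' ≤ optVal v b B (A'.erase i) + v {i} := by
  refine optVal_le hB fun S hS hcost ↦ ?_
  have hcost_erase : ∑ j ∈ S.erase i, b j ≤ ∑ j ∈ S, b j :=
    Finset.sum_le_sum_of_subset_of_nonneg (S.erase_subset i) fun j hj hj' ↦ by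
      obtain rfl : j = i := by_contra fun hji ↦ hj' (Finset.mem_erase.2 ⟨hji, hj⟩)
      exact hbi
  calc
    v S ≤ v (insert i (S.erase i)) := hvmono (Finset.insert_erase_subset i S)
    _ ≤ v (S.erase i) + v {i} := hinsert _
    _ ≤ optVal v b B (A'.erase i) + v {i} := by
      gcongr
      exact le_optVal (Finset.erase_subset_erase i hS) (hcost_erase.trans hcost)

end Optimum

section Greedy

variable {ι : Type*} [Fintype ι] [LinearOrder ι] [Nonempty ι] {v : Finset ι → ℝ} {b : ι → ℝ}

theorem pick_notMem {S : Finset ι} (hS : Sᶜ.Nonempty) : pick v b S ∉ S := by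
  rw [pick, dif_pos hS, ← Finset.mem_compl]
  exact Finset.filter_subset _ _ (Finset.min'_mem _ _)

theorem card_greedySet {t : ℕ} (ht : t ≤ Fintype.card ι) : (greedySet v b t).card = t := by
  induction t with
  | zero => rfl
  | succ t ih =>
    have hcard : (greedySet v b t).card = t := ih (by lia)
    have hcompl : (greedySet v b t)ᶜ.Nonempty := by
      rw [← Finset.card_pos, Finset.card_compl]
      lia
    rw [greedySet, Finset.card_insert_of_notMem (pick_notMem hcompl), hcard]

theorem greedySet_card_eq_univ : greedySet v b (Fintype.card ι) = Finset.univ :=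
  Finset.eq_univ_of_card _ (card_greedySet le_rfl)

theorem greedySet_eq_insert_agent {k : ℕ} (hk : 1 ≤ k) :
    greedySet v b k = insert (agent v b k) (greedySet v b (k - 1)) := by
  obtain ⟨t, rfl⟩ := Nat.exists_eq_add_of_le' hk
  rfl

end Greedy

section Mechanism

variable {ι : Type*} [Fintype ι] [LinearOrder ι] [Nonempty ι] {v : Finset ι → ℝ}
  {O : (ι → ℝ) → Finset ι → ℝ} {α : ℝ} {b : ι → ℝ} {k : ℕ}

theorem mul_oracle_lt_of_agent_notMem_greedyOM (hk1 : 1 ≤ k) (hk2 : k ≤ Fintype.card ι)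
    (hrejected : agent v b k ∉ greedyOM v O α b) :
    α * O b (Finset.univ.erase (agent v b k)) < v (greedySet v b k) := by
  contrapose! hrejected
  exact Finset.mem_image_of_mem _
    (Finset.mem_filter.2 ⟨Finset.mem_Icc.2 ⟨hk1, hk2⟩, hrejected⟩)

theorem agent_notMem_greedyOM_of_maximal_prefix (hSne : greedyOM v O α b ≠ Finset.univ)
    (hk1 : 1 ≤ k) (hk2 : k ≤ Fintype.card ι)
    (hksub : greedySet v b (k - 1) ⊆ greedyOM v O α b)
    (hkmax : ∀ k', 1 ≤ k' → k' ≤ Fintype.card ι →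
      greedySet v b (k' - 1) ⊆ greedyOM v O α b → k' ≤ k) :
    agent v b k ∉ greedyOM v O α b := by
  intro haccepted
  have hsub : greedySet v b k ⊆ greedyOM v O α b := by
    rw [greedySet_eq_insert_agent hk1]
    exact Finset.insert_subset haccepted hksub
  rcases hk2.lt_or_eq with hlt | rfl
  · exact (hkmax (k + 1) (by lia) hlt hsub).not_gt k.lt_succ_self
  · rw [greedySet_card_eq_univ] at hsub
    exact hSne (Finset.univ_subset_iff.1 hsub)

end Mechanism

theorem greedyOM_approx_general {ι : Type*} [Fintype ι] [LinearOrder ι] [Nonempty ι]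
    {v : Finset ι → ℝ} (hv0 : 0 ≤ v ∅) (hvmono : Monotone v)
    (hvsub : ∀ S T : Finset ι, v (S ∪ T) + v (S ∩ T) ≤ v S + v T)
    {B : ℝ} (hB : 0 ≤ B) {c : ι → ℝ} (hc : ∀ i, 0 < c i)
    {r α : ℝ} (hr : 0 ≤ r) (hα : 0 < α) {O : (ι → ℝ) → Finset ι → ℝ}
    (hO : ∀ i, optVal v c B (Finset.univ.erase i) ≤ r * O c (Finset.univ.erase i))
    {k : ℕ} (hk1 : 1 ≤ k) (hk2 : k ≤ Fintype.card ι)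
    (hrejected : agent v c k ∉ greedyOM v O α c) :
    optVal v c B Finset.univ ≤
      (r / α) * v (greedySet v c (k - 1)) + (1 + r / α) * v {agent v c k} := by
  set a := agent v c k
  have hinsert := apply_insert_le_add_apply_singleton hv0 hvmono hvsub a
  have hthreshold : α * O c (Finset.univ.erase a) ≤ v (greedySet v c (k - 1)) + v {a} := by
    have hlt := mul_oracle_lt_of_agent_notMem_greedyOM hk1 hk2 hrejected
    rw [greedySet_eq_insert_agent hk1] at hlt
    exact hlt.le.trans (hinsert _)
  calc
    optVal v c B Finset.univ ≤ optVal v c B (Finset.univ.erase a) + v {a} :=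
      optVal_le_optVal_erase_add hvmono hinsert hB (hc a).le
    _ ≤ r * O c (Finset.univ.erase a) + v {a} := by gcongr; exact hO a
    _ = (r / α) * (α * O c (Finset.univ.erase a)) + v {a} := by field_simp
    _ ≤ (r / α) * (v (greedySet v c (k - 1)) + v {a}) + v {a} := by gcongr
    _ = (r / α) * v (greedySet v c (k - 1)) + (1 + r / α) * v {a} := by ring

/-- the approximation inequality for `Greedy-OM(α)` with an `r`-approximation
oracle (part of Lemma 4.6). -/
theorem greedyOM_approx {ι : Type*} [Fintype ι] [LinearOrder ι] [Nonempty ι]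
    (v : Finset ι → ℝ) (hv0 : v (∅ : Finset ι) = 0)
    (hvmono : ∀ S T : Finset ι, S ⊆ T → v S ≤ v T)
    (hvsub : ∀ S T : Finset ι, v (S ∪ T) + v (S ∩ T) ≤ v S + v T)
    (B : ℝ) (hB : 0 < B)
    (c : ι → ℝ) (hc : ∀ i, 0 < c i) (hcB : ∀ i, c i ≤ B)
    (r : ℝ) (hr : 1 ≤ r) (α : ℝ) (hα0 : 0 < α) (hα1 : α ≤ 1)
    (O : (ι → ℝ) → Finset ι → ℝ)
    (hO : ∀ A' : Finset ι, O c A' ≤ optVal v c B A' ∧ optVal v c B A' ≤ r * O c A')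
    (istar : ι) (histar : ∀ j : ι, v {j} ≤ v {istar})
    (hSne : greedyOM v O α c ≠ Finset.univ)
    (k : ℕ) (hk1 : 1 ≤ k) (hk2 : k ≤ Fintype.card ι)
    (hksub : greedySet v c (k - 1) ⊆ greedyOM v O α c)
    (hkmax : ∀ k', 1 ≤ k' → k' ≤ Fintype.card ι →
      greedySet v c (k' - 1) ⊆ greedyOM v O α c → k' ≤ k) :
    (r / α) * v (greedySet v c (k - 1)) + (1 + r / α) * v {istar} ≥
      optVal v c B Finset.univ := by
  have hr0 : 0 ≤ r := zero_le_one.trans hr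
  have hrejected := agent_notMem_greedyOM_of_maximal_prefix hSne hk1 hk2 hksub hkmax
  exact (greedyOM_approx_general hv0.ge (fun S T hST ↦ hvmono S T hST) hvsub hB.le hc hr0 hα0
    (fun _ ↦ (hO _).2) hk1 hk2 hrejected).trans (by gcongr; exact histar _)
end
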